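/- If γ is non-oscillating at O, then along γ the Hessian applied to the unit gradient is asymptotically parallel to the unit gradient: ⟨Hs(f)(x)·ν_f(x), ν_f(x)⟩ ≠ 0 for x on γ near O, and |Hs(f)(x)·ν_f(x) − ⟨Hs(f)(x)·ν_f(x), ν_f(x)⟩·ν_f(x)| = o(|⟨Hs(f)(x)·ν_f(x), ν_f(x)⟩|) as x → O along γ. -/

import Mathlib

open scoped RealInnerProductSpace Topology
open Filter

/-!
For an analytic vector field `X` vanishing at `O`, such as `X = ∇f`, write `ν = X/|X|` and split
`DX(ν) = q ν + T` with `T ⟂ ν`. Along a trajectory `γ` of `ν` tending to `O` one has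
`(log |X|)' = q/|X|` and `ν' = T/|X|`, where `log |X| → -∞` while `ν` stays bounded. For a fixed
vector `e` and `c > 0`, the sign of `⟨T, e⟩² - (c q)²` is that of an analytic function, so along
`γ` this quantity is eventually zero or eventually nonzero. In the latter case the derivatives of
`c log |X| ± ⟨ν, e⟩` have constant sign by Darboux, and the sign is negative because both
functions tend to `-∞`; hence `|⟨T, e⟩| ≤ c |q|`.
-/

section OneSidedLimits

variable {L B : ℝ} {φ φ' ψ ψ' : ℝ → ℝ}

lemma not_tendsto_atBot_of_deriv_nonneg (hφ : ∀ᶠ s in 𝓝[<] L, HasDerivAt φ (φ' s) s)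
    (hφ' : ∀ᶠ s in 𝓝[<] L, 0 ≤ φ' s) : ¬ Tendsto φ (𝓝[<] L) atBot := by
  intro hlim
  obtain ⟨a, haL, ha⟩ := mem_nhdsLT_iff_exists_Ioo_subset.1 (hφ.and hφ')
  have hmono : MonotoneOn φ (Set.Ioo a L) := by
    refine monotoneOn_of_hasDerivWithinAt_nonneg (f' := φ') (convex_Ioo a L)
      (fun s hs => (ha hs).1.continuousAt.continuousWithinAt) ?_ ?_ <;> rw [interior_Ioo]
    · exact fun s hs => (ha hs).1.hasDerivWithinAt
    · exact fun s hs => (ha hs).2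
  obtain ⟨m, ham, hmL⟩ := exists_between (Set.mem_Iio.1 haL)
  have hIoo : ∀ᶠ s in 𝓝[<] L, s ∈ Set.Ioo m L := Ioo_mem_nhdsLT hmL
  obtain ⟨s, hs, hlt⟩ := (hIoo.and (hlim.eventually (eventually_lt_atBot (φ m)))).exists
  exact hlt.not_ge (hmono ⟨ham, hmL⟩ ⟨ham.trans hs.1, hs.2⟩ hs.1.le)

lemma eventually_deriv_neg_of_tendsto_atBot (hφ : ∀ᶠ s in 𝓝[<] L, HasDerivAt φ (φ' s) s)
    (hne : ∀ᶠ s in 𝓝[<] L, φ' s ≠ 0) (hlim : Tendsto φ (𝓝[<] L) atBot) :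
    ∀ᶠ s in 𝓝[<] L, φ' s < 0 := by
  obtain ⟨a, haL, ha⟩ := mem_nhdsLT_iff_exists_Ioo_subset.1 (hφ.and hne)
  have hIoo : ∀ᶠ s in 𝓝[<] L, s ∈ Set.Ioo a L := Ioo_mem_nhdsLT haL
  rcases hasDerivWithinAt_forall_lt_or_forall_gt_of_forall_ne (convex_Ioo a L)
    (fun s hs => (ha hs).1.hasDerivWithinAt) (fun s hs => (ha hs).2) with hneg | hpos
  · exact hIoo.mono hneg
  · exact (not_tendsto_atBot_of_deriv_nonneg hφ (hIoo.mono fun s hs => (hpos s hs).le) hlim).elim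

theorem isLittleO_deriv_of_bounded_of_tendsto_atBot
    (hφ : ∀ᶠ s in 𝓝[<] L, HasDerivAt φ (φ' s) s) (hψ : ∀ᶠ s in 𝓝[<] L, HasDerivAt ψ (ψ' s) s)
    (hB : ∀ᶠ s in 𝓝[<] L, |φ s| ≤ B) (hlim : Tendsto ψ (𝓝[<] L) atBot)
    (hcomp : ∀ c > 0, (∀ᶠ s in 𝓝[<] L, φ' s ^ 2 = (c * ψ' s) ^ 2) ∨
      ∀ᶠ s in 𝓝[<] L, φ' s ^ 2 ≠ (c * ψ' s) ^ 2) :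
    φ' =o[𝓝[<] L] ψ' := by
  refine Asymptotics.isLittleO_iff.2 fun c hc => ?_
  simp only [Real.norm_eq_abs]
  rcases hcomp c hc with heq | hne
  · filter_upwards [heq] with s hs
    rw [(sq_eq_sq_iff_abs_eq_abs _ _).1 hs, abs_mul, abs_of_pos hc]
  have hcψ : ∀ᶠ s in 𝓝[<] L, HasDerivAt (fun s => c * ψ s) (c * ψ' s) s :=
    hψ.mono fun s hs => hs.const_mul c
  have hclim : Tendsto (fun s => c * ψ s) (𝓝[<] L) atBot := hlim.const_mul_atBot hc
  have hadd : ∀ᶠ s in 𝓝[<] L, φ' s + c * ψ' s < 0 := by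
    refine eventually_deriv_neg_of_tendsto_atBot (hφ.mp (hcψ.mono fun s h₁ h₂ => h₂.add h₁))
      (hne.mono fun s hs h => hs ?_)
      (tendsto_atBot_add_left_of_ge' _ B (hB.mono fun s hs => (abs_le.1 hs).2) hclim)
    rw [eq_neg_of_add_eq_zero_left h, neg_sq]
  have hsub : ∀ᶠ s in 𝓝[<] L, -φ' s + c * ψ' s < 0 := by
    refine eventually_deriv_neg_of_tendsto_atBot (hφ.mp (hcψ.mono fun s h₁ h₂ => h₂.neg.add h₁))
      (hne.mono fun s hs h => hs ?_)
      (tendsto_atBot_add_left_of_ge' _ B (hB.mono fun s hs => (neg_le_abs _).trans hs) hclim)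
    rw [neg_add_eq_zero.1 h]
  filter_upwards [hadd, hsub] with s hadd hsub
  calc |φ' s| ≤ -(c * ψ' s) := abs_le.2 ⟨by linarith, by linarith⟩
    _ ≤ |c * ψ' s| := neg_le_abs _
    _ = c * |ψ' s| := by rw [abs_mul, abs_of_pos hc]

end OneSidedLimits

section InnerProductSpace

variable {E : Type*} [NormedAddCommGroup E] [InnerProductSpace ℝ E]

lemma isLittleO_of_forall_inner [FiniteDimensional ℝ E] {α F : Type*} [SeminormedAddCommGroup F]
    {l : Filter α} {h : α → E} {k : α → F} (hh : ∀ e, (fun a => ⟪h a, e⟫) =o[l] k) : h =o[l] k := by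
  let b := stdOrthonormalBasis ℝ E
  have hsum : (fun a => ∑ i, ⟪b i, h a⟫ • b i) =o[l] k := by
    refine Asymptotics.IsLittleO.fun_sum fun i _ => ?_
    refine (Asymptotics.IsBigO.of_norm_right
      (Asymptotics.IsBigO.of_norm_le fun a => ?_)).trans_isLittleO (hh (b i))
    rw [norm_smul, b.norm_eq_one, mul_one, real_inner_comm]
  simpa only [b.sum_repr'] using hsum

lemma analyticAt_inner {F : Type*} [NormedAddCommGroup F] [NormedSpace ℝ F] {u v : F → E} {x : F}
    (hu : AnalyticAt ℝ u x) (hv : AnalyticAt ℝ v x) :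
    AnalyticAt ℝ (fun y => ⟪u y, v y⟫) x :=
  ((innerSL ℝ).analyticAt_bilinear _).comp₂ hu hv

lemma analyticAt_gradient [CompleteSpace E] {f : E → ℝ} {x : E} (hf : AnalyticAt ℝ f x) :
    AnalyticAt ℝ (gradient f) x :=
  ((InnerProductSpace.toDual ℝ E).symm.toContinuousLinearEquiv.toContinuousLinearMap.analyticAt
    _).comp hf.fderiv

lemma hasDerivAt_norm_of_ne_zero {v : ℝ → E} {v' : E} {s : ℝ} (hv : HasDerivAt v v' s)
    (hne : v s ≠ 0) : HasDerivAt (fun t => ‖v t‖) (⟪v s, v'⟫ / ‖v s‖) s := by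
  have hsqrt := hv.norm_sq.sqrt (pow_ne_zero 2 (norm_ne_zero_iff.2 hne))
  simp only [Real.sqrt_sq (norm_nonneg _)] at hsqrt
  exact hsqrt.congr_deriv (mul_div_mul_left _ _ two_ne_zero)

end InnerProductSpace

section VectorField

variable {E : Type*} [NormedAddCommGroup E] [InnerProductSpace ℝ E]
  {X : E → E} {γ : ℝ → E} {L s : ℝ} {p : E}

/-- The normalization `ν = X/|X|` of a vector field `X`, with the junk value `0` at its zeros. -/
noncomputable def unitField (X : E → E) (x : E) : E := ‖X x‖⁻¹ • X x

/-- The coefficient `⟨DX(ν), ν⟩` along `ν = X/|X|` of the derivative of `X` in the direction `ν`. -/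
noncomputable def tangentialDeriv (X : E → E) (x : E) : ℝ :=
  ⟪fderiv ℝ X x (unitField X x), unitField X x⟫

/-- The component `DX(ν) - ⟨DX(ν), ν⟩ ν` orthogonal to `ν = X/|X|` of the derivative of `X` in the
direction `ν`. -/
noncomputable def normalDeriv (X : E → E) (x : E) : E :=
  fderiv ℝ X x (unitField X x) - tangentialDeriv X x • unitField X x

/-- `γ` is, for parameters close to `L` on the left, a trajectory of the unit field of `X`, and it
tends to `p` there. Only the germ of `γ` at `L` matters. -/
structure IsUnitTrajectoryTo (X : E → E) (γ : ℝ → E) (L : ℝ) (p : E) : Prop where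
  ne_zero : ∀ᶠ s in 𝓝[<] L, X (γ s) ≠ 0
  hasDerivAt : ∀ᶠ s in 𝓝[<] L, HasDerivAt γ (unitField X (γ s)) s
  tendsto : Tendsto γ (𝓝[<] L) (𝓝 p)

/-- The curve `γ`, thought of as tending to `p` at `L` from the left, is non-oscillating at `p`:
every function analytic at `p` either vanishes identically or has no zero on the end of `γ`. -/
def IsNonOscillatingAt (γ : ℝ → E) (L : ℝ) (p : E) : Prop :=
  ∀ g : E → ℝ, AnalyticAt ℝ g p →
    (∀ᶠ s in 𝓝[<] L, g (γ s) = 0) ∨ ∀ᶠ s in 𝓝[<] L, g (γ s) ≠ 0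

lemma tangentialDeriv_eq_div (X : E → E) (x : E) :
    tangentialDeriv X x = ⟪fderiv ℝ X x (X x), X x⟫ / ‖X x‖ ^ 2 := by
  simp only [tangentialDeriv, unitField, map_smul, real_inner_smul_left, real_inner_smul_right]
  ring

lemma inner_normalDeriv_eq_div {x : E} (hx : X x ≠ 0) (e : E) :
    ⟪normalDeriv X x, e⟫ =
      (‖X x‖ ^ 2 * ⟪fderiv ℝ X x (X x), e⟫ - ⟪fderiv ℝ X x (X x), X x⟫ * ⟪X x, e⟫) /
        ‖X x‖ ^ 3 := by
  have hnorm : ‖X x‖ ≠ 0 := norm_ne_zero_iff.2 hx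
  simp only [normalDeriv, tangentialDeriv_eq_div, unitField, map_smul, inner_sub_left,
    real_inner_smul_left]
  field_simp

lemma abs_inner_unitField_le (X : E → E) (x e : E) : |⟪unitField X x, e⟫| ≤ ‖e‖ := by
  have hunit : ‖unitField X x‖ ≤ 1 := by
    rw [unitField, norm_smul, norm_inv, norm_norm]
    exact inv_mul_le_one
  calc |⟪unitField X x, e⟫| ≤ ‖unitField X x‖ * ‖e‖ := abs_real_inner_le_norm _ _
    _ ≤ ‖e‖ := mul_le_of_le_one_left (norm_nonneg e) hunit

lemma hasDerivAt_norm_comp_of_unitField (hX : DifferentiableAt ℝ X (γ s)) (hne : X (γ s) ≠ 0)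
    (hγ : HasDerivAt γ (unitField X (γ s)) s) :
    HasDerivAt (fun t => ‖X (γ t)‖) (tangentialDeriv X (γ s)) s := by
  refine (hasDerivAt_norm_of_ne_zero (hX.hasFDerivAt.comp_hasDerivAt s hγ) hne).congr_deriv ?_
  simp only [Function.comp_apply, tangentialDeriv]
  nth_rewrite 3 [unitField]
  rw [real_inner_smul_right, real_inner_comm, div_eq_inv_mul]

lemma hasDerivAt_unitField_comp (hX : DifferentiableAt ℝ X (γ s)) (hne : X (γ s) ≠ 0)
    (hγ : HasDerivAt γ (unitField X (γ s)) s) :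
    HasDerivAt (fun t => unitField X (γ t)) (‖X (γ s)‖⁻¹ • normalDeriv X (γ s)) s := by
  have hinv := (hasDerivAt_norm_comp_of_unitField hX hne hγ).inv (norm_ne_zero_iff.2 hne)
  refine (hinv.smul (hX.hasFDerivAt.comp_hasDerivAt s hγ)).congr_deriv ?_
  simp only [Function.comp_apply, Pi.inv_apply, normalDeriv, unitField]
  module

lemma analyticAt_fderiv_apply_self [CompleteSpace E] (hX : AnalyticAt ℝ X p) :
    AnalyticAt ℝ (fun x => fderiv ℝ X x (X x)) p :=
  ((ContinuousLinearMap.id ℝ (E →L[ℝ] E)).analyticAt_bilinear _).comp₂ hX.fderiv hX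

namespace IsNonOscillatingAt

lemma eventually_or_eventually_not (hosc : IsNonOscillatingAt γ L p) {g : E → ℝ}
    (hg : AnalyticAt ℝ g p) {P : ℝ → Prop} (hP : ∀ᶠ s in 𝓝[<] L, P s ↔ g (γ s) = 0) :
    (∀ᶠ s in 𝓝[<] L, P s) ∨ ∀ᶠ s in 𝓝[<] L, ¬P s :=
  (hosc g hg).imp (eventually_congr hP).2 (eventually_congr (hP.mono fun _ => not_congr)).2

variable [CompleteSpace E]

lemma eventually_tangentialDeriv_div_norm_eq_zero_or_ne_zero (hosc : IsNonOscillatingAt γ L p)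
    (hX : AnalyticAt ℝ X p) (hne : ∀ᶠ s in 𝓝[<] L, X (γ s) ≠ 0) :
    (∀ᶠ s in 𝓝[<] L, tangentialDeriv X (γ s) / ‖X (γ s)‖ = 0) ∨
      ∀ᶠ s in 𝓝[<] L, tangentialDeriv X (γ s) / ‖X (γ s)‖ ≠ 0 := by
  refine hosc.eventually_or_eventually_not
    (analyticAt_inner (analyticAt_fderiv_apply_self hX) hX) ?_
  filter_upwards [hne] with s hs
  have hnorm : ‖X (γ s)‖ ≠ 0 := norm_ne_zero_iff.2 hs
  rw [tangentialDeriv_eq_div, div_div, div_eq_zero_iff,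
    or_iff_left (mul_ne_zero (pow_ne_zero 2 hnorm) hnorm)]

lemma eventually_sq_inner_normalDeriv_div_norm_eq_or_ne (hosc : IsNonOscillatingAt γ L p)
    (hX : AnalyticAt ℝ X p) (hne : ∀ᶠ s in 𝓝[<] L, X (γ s) ≠ 0) (e : E) (c : ℝ) :
    (∀ᶠ s in 𝓝[<] L, (⟪normalDeriv X (γ s), e⟫ / ‖X (γ s)‖) ^ 2 =
        (c * (tangentialDeriv X (γ s) / ‖X (γ s)‖)) ^ 2) ∨
      ∀ᶠ s in 𝓝[<] L, (⟪normalDeriv X (γ s), e⟫ / ‖X (γ s)‖) ^ 2 ≠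
        (c * (tangentialDeriv X (γ s) / ‖X (γ s)‖)) ^ 2 := by
  let Q : E → ℝ := fun x => ⟪fderiv ℝ X x (X x), X x⟫
  let N : E → ℝ := fun x => ⟪X x, X x⟫
  let g : E → ℝ := fun x =>
    (N x * ⟪fderiv ℝ X x (X x), e⟫ - Q x * ⟪X x, e⟫) ^ 2 - c ^ 2 * (Q x ^ 2 * N x)
  have hg : AnalyticAt ℝ g p := by
    have hDX := analyticAt_fderiv_apply_self hX
    have hQ : AnalyticAt ℝ Q p := analyticAt_inner hDX hX
    have hN : AnalyticAt ℝ N p := analyticAt_inner hX hX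
    exact (((hN.mul (analyticAt_inner hDX analyticAt_const)).sub
      (hQ.mul (analyticAt_inner hX analyticAt_const))).pow 2).sub
        (analyticAt_const.mul ((hQ.pow 2).mul hN))
  refine hosc.eventually_or_eventually_not hg ?_
  filter_upwards [hne] with s hs
  have hnorm : ‖X (γ s)‖ ≠ 0 := norm_ne_zero_iff.2 hs
  have hfactor : g (γ s) = ‖X (γ s)‖ ^ 8 * ((⟪normalDeriv X (γ s), e⟫ / ‖X (γ s)‖) ^ 2 -
      (c * (tangentialDeriv X (γ s) / ‖X (γ s)‖)) ^ 2) := by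
    rw [inner_normalDeriv_eq_div hs, tangentialDeriv_eq_div]
    simp only [g, Q, N, real_inner_self_eq_norm_sq]
    field_simp
  rw [hfactor, mul_eq_zero, or_iff_right (pow_ne_zero 8 hnorm), sub_eq_zero]

end IsNonOscillatingAt

namespace IsUnitTrajectoryTo

lemma tendsto_log_norm_atBot (hγ : IsUnitTrajectoryTo X γ L p) (hX : ContinuousAt X p)
    (hXp : X p = 0) : Tendsto (fun s => Real.log ‖X (γ s)‖) (𝓝[<] L) atBot := by
  have hnorm : Tendsto (fun s => ‖X (γ s)‖) (𝓝[<] L) (𝓝 0) := by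
    simpa only [Function.comp_apply, hXp, norm_zero] using (hX.tendsto.comp hγ.tendsto).norm
  exact Real.tendsto_log_nhdsGT_zero.comp
    (tendsto_nhdsWithin_iff.2 ⟨hnorm, hγ.ne_zero.mono fun _ => norm_pos_iff.2⟩)

variable [CompleteSpace E]

lemma eventually_hasDerivAt_log_norm (hγ : IsUnitTrajectoryTo X γ L p) (hX : AnalyticAt ℝ X p) :
    ∀ᶠ s in 𝓝[<] L, HasDerivAt (fun t => Real.log ‖X (γ t)‖)
      (tangentialDeriv X (γ s) / ‖X (γ s)‖) s := by
  filter_upwards [hγ.tendsto.eventually hX.eventually_analyticAt, hγ.ne_zero, hγ.hasDerivAt]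
    with s hXs hne hs
  exact (hasDerivAt_norm_comp_of_unitField hXs.differentiableAt hne hs).log (norm_ne_zero_iff.2 hne)

lemma eventually_hasDerivAt_inner_unitField (hγ : IsUnitTrajectoryTo X γ L p)
    (hX : AnalyticAt ℝ X p) (e : E) :
    ∀ᶠ s in 𝓝[<] L, HasDerivAt (fun t => ⟪unitField X (γ t), e⟫)
      (⟪normalDeriv X (γ s), e⟫ / ‖X (γ s)‖) s := by
  filter_upwards [hγ.tendsto.eventually hX.eventually_analyticAt, hγ.ne_zero, hγ.hasDerivAt]
    with s hXs hne hs
  refine ((hasDerivAt_unitField_comp hXs.differentiableAt hne hs).inner ℝ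
    (hasDerivAt_const s e)).congr_deriv ?_
  rw [inner_zero_right, zero_add, real_inner_smul_left, div_eq_inv_mul]

lemma eventually_tangentialDeriv_neg (hγ : IsUnitTrajectoryTo X γ L p) (hX : AnalyticAt ℝ X p)
    (hXp : X p = 0) (hosc : IsNonOscillatingAt γ L p) :
    ∀ᶠ s in 𝓝[<] L, tangentialDeriv X (γ s) < 0 := by
  have hlog := hγ.eventually_hasDerivAt_log_norm hX
  have hlim := hγ.tendsto_log_norm_atBot hX.continuousAt hXp
  rcases hosc.eventually_tangentialDeriv_div_norm_eq_zero_or_ne_zero hX hγ.ne_zero with hzero | hne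
  · exact (not_tendsto_atBot_of_deriv_nonneg hlog (hzero.mono fun _ hs => hs.ge) hlim).elim
  · filter_upwards [eventually_deriv_neg_of_tendsto_atBot hlog hne hlim] with s hs
    exact neg_of_div_neg_left hs (norm_nonneg _)

lemma inner_normalDeriv_isLittleO (hγ : IsUnitTrajectoryTo X γ L p) (hX : AnalyticAt ℝ X p)
    (hXp : X p = 0) (hosc : IsNonOscillatingAt γ L p) (e : E) :
    (fun s => ⟪normalDeriv X (γ s), e⟫) =o[𝓝[<] L] fun s => tangentialDeriv X (γ s) := by
  have hdiv : (fun s => ⟪normalDeriv X (γ s), e⟫ / ‖X (γ s)‖) =o[𝓝[<] L]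
      fun s => tangentialDeriv X (γ s) / ‖X (γ s)‖ :=
    isLittleO_deriv_of_bounded_of_tendsto_atBot (hγ.eventually_hasDerivAt_inner_unitField hX e)
      (hγ.eventually_hasDerivAt_log_norm hX)
      (Eventually.of_forall fun s => abs_inner_unitField_le X (γ s) e)
      (hγ.tendsto_log_norm_atBot hX.continuousAt hXp) fun c _ =>
        hosc.eventually_sq_inner_normalDeriv_div_norm_eq_or_ne hX hγ.ne_zero e c
  refine ((Asymptotics.isBigO_refl (fun s => ‖X (γ s)‖) _).mul_isLittleO hdiv).congr' ?_ ?_ <;>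
    filter_upwards [hγ.ne_zero] with s hs using mul_div_cancel₀ _ (norm_ne_zero_iff.2 hs)

end IsUnitTrajectoryTo

end VectorField

theorem hessian_unit_gradient_asymptotically_parallel_general {E : Type*} [NormedAddCommGroup E]
    [InnerProductSpace ℝ E] [FiniteDimensional ℝ E] {X : E → E} {γ : ℝ → E} {L : ℝ} {p : E}
    (hX : AnalyticAt ℝ X p) (hXp : X p = 0) (hγ : IsUnitTrajectoryTo X γ L p)
    (hosc : IsNonOscillatingAt γ L p) :
    (∀ᶠ s in 𝓝[<] L, tangentialDeriv X (γ s) < 0) ∧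
      (fun s => normalDeriv X (γ s)) =o[𝓝[<] L] fun s => tangentialDeriv X (γ s) :=
  ⟨hγ.eventually_tangentialDeriv_neg hX hXp hosc,
    isLittleO_of_forall_inner (hγ.inner_normalDeriv_isLittleO hX hXp hosc)⟩

/-- along a non-oscillating trajectory the Hessian applied to the unit gradient is
asymptotically parallel to the unit gradient. -/
theorem hessian_unit_gradient_asymptotically_parallel
    {n : ℕ} (hn : 2 ≤ n)
    (U : Set (EuclideanSpace ℝ (Fin n))) (hUopen : IsOpen U)
    (hOU : (0 : EuclideanSpace ℝ (Fin n)) ∈ U)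
    (f : EuclideanSpace ℝ (Fin n) → ℝ)
    (hfan : AnalyticOnNhd ℝ f U) (hf0 : f 0 = 0) (hgf0 : gradient f 0 = 0)
    (L : ℝ) (hL : 0 < L)
    (γ : ℝ → EuclideanSpace ℝ (Fin n))
    (hγU : ∀ s ∈ Set.Ico (0 : ℝ) L, γ s ∈ U)
    (hγreg : ∀ s ∈ Set.Ico (0 : ℝ) L, gradient f (γ s) ≠ 0)
    (hγode : ∀ s ∈ Set.Ico (0 : ℝ) L,
      HasDerivAt γ (‖gradient f (γ s)‖⁻¹ • gradient f (γ s)) s)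
    (hfneg : f (γ 0) < 0)
    (hfmono : StrictMonoOn (fun s => f (γ s)) (Set.Ico (0 : ℝ) L))
    (hγlim : Tendsto γ (𝓝[<] L) (𝓝 0))
    (hosc : ∀ g : EuclideanSpace ℝ (Fin n) → ℝ, AnalyticAt ℝ g 0 →
      (∀ᶠ s in 𝓝[<] L, g (γ s) = 0) ∨ (∀ᶠ s in 𝓝[<] L, g (γ s) ≠ 0))
    :
    (∀ᶠ s in 𝓝[<] L,
      ⟪fderiv ℝ (gradient f) (γ s) (‖gradient f (γ s)‖⁻¹ • gradient f (γ s)),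
        ‖gradient f (γ s)‖⁻¹ • gradient f (γ s)⟫ ≠ 0) ∧
    (fun s =>
        fderiv ℝ (gradient f) (γ s) (‖gradient f (γ s)‖⁻¹ • gradient f (γ s)) -
          ⟪fderiv ℝ (gradient f) (γ s) (‖gradient f (γ s)‖⁻¹ • gradient f (γ s)),
            ‖gradient f (γ s)‖⁻¹ • gradient f (γ s)⟫ •
            (‖gradient f (γ s)‖⁻¹ • gradient f (γ s)))
      =o[𝓝[<] L] fun s =>
        ⟪fderiv ℝ (gradient f) (γ s) (‖gradient f (γ s)‖⁻¹ • gradient f (γ s)),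
          ‖gradient f (γ s)‖⁻¹ • gradient f (γ s)⟫ := by
  have hIco : ∀ᶠ s in 𝓝[<] L, s ∈ Set.Ico 0 L := Ico_mem_nhdsLT hL
  have htraj : IsUnitTrajectoryTo (gradient f) γ L 0 :=
    ⟨hIco.mono hγreg, hIco.mono hγode, hγlim⟩
  exact (hessian_unit_gradient_asymptotically_parallel_general (analyticAt_gradient (hfan 0 hOU))
    hgf0 htraj hosc).imp_left fun hneg => hneg.mono fun _ hs => hs.ne
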